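/- arXiv:2207.05694 — 2 statements merged into one kernel-verified Lean document; each statement's English description precedes it below -/
import Mathlib

section
/- Let d ≥ 2 and let x, y be probability vectors of dimension d with strictly positive entries whose nonincreasing rearrangements are not equal. Then there exists a probability vector c (of some finite dimension) such that x⊗c ≺ y⊗c if and only if f_α(y) > f_α(x) for every real number α, where f_α(v) = ln Σ_i v_i^α for α > 1, f_1(v) = Σ_i v_i ln v_i, f_α(v) = −ln Σ_i v_i^α for 0 < α < 1, f_0(v) = −Σ_i ln v_i, and f_α(v) = ln Σ_i v_i^α for α < 0. -/
/-- The sum of the `k` largest entries of a vector (equivalently, for vectors with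
nonnegative entries, the maximum of `∑ i ∈ s, x i` over subsets `s` of cardinality at
most `k`; this also accounts for padding with zeros). -/
noncomputable def topSum {ι : Type*} [Fintype ι] [DecidableEq ι] (x : ι → ℝ) (k : ℕ) : ℝ :=
  ((Finset.univ : Finset ι).powerset.filter (fun s => s.card ≤ k)).sup'
    ⟨∅, by simp⟩ (fun s => ∑ i ∈ s, x i)

/-- A probability vector: nonnegative entries summing to 1. -/
def IsProbVec {ι : Type*} [Fintype ι] (x : ι → ℝ) : Prop :=
  (∀ i, 0 ≤ x i) ∧ ∑ i, x i = 1

/-- `x ≺ y` (majorization, after padding with zeros to a common dimension): every partial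
sum of the `k` largest entries of `x` is at most that of `y`, with equal total sums. -/
def PMaj {ι κ : Type*} [Fintype ι] [DecidableEq ι] [Fintype κ] [DecidableEq κ]
    (x : ι → ℝ) (y : κ → ℝ) : Prop :=
  (∀ k : ℕ, topSum x k ≤ topSum y k) ∧ (∑ i, x i = ∑ j, y j)

/-- Tensor product of two vectors: `(x ⊗ y)_{(i,j)} = x_i y_j`. -/
def pvTensor {ι κ : Type*} (x : ι → ℝ) (y : κ → ℝ) : ι × κ → ℝ :=
  fun p => x p.1 * y p.2

/-- The functions `f_α` of Turgut and Klimesh. -/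
noncomputable def fAlpha {ι : Type*} [Fintype ι] (α : ℝ) (v : ι → ℝ) : ℝ :=
  if 1 < α then Real.log (∑ i, v i ^ α)
  else if α = 1 then ∑ i, v i * Real.log (v i)
  else if 0 < α then - Real.log (∑ i, v i ^ α)
  else if α = 0 then - ∑ i, Real.log (v i)
  else Real.log (∑ i, v i ^ α)

section Proofs

open Finset Filter Topology

/-- A perturbation of the homogenisation `∑ aₖ xᵏ (1 - x)ⁿ⁻ᵏ` of a polynomial, in which powers are
replaced by falling factorials of step `δ`. -/
noncomputable def fallingForm (a : ℕ → ℝ) (n : ℕ) (δ x : ℝ) : ℝ :=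
  ∑ k ∈ range (n + 1), a k * ((∏ i ∈ range k, (x - i * δ)) * ∏ i ∈ range (n - k), (1 - x - i * δ))

theorem cast_descFactorial_eq_prod (m k : ℕ) :
    (m.descFactorial k : ℝ) = ∏ i ∈ range k, ((m : ℝ) - i) := by
  rw [← descPochhammer_eval_eq_descFactorial, descPochhammer_eval_eq_prod_range]

theorem choose_mul_factorial_mul_factorial_eq {N n m k : ℕ} (hk : k ≤ n) (hkm : k ≤ m)
    (hm : m ≤ N + n) :
    N.choose (m - k) * (m.factorial * (N + n - m).factorial) =
      N.factorial * (m.descFactorial k * (N + n - m).descFactorial (n - k)) := by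
  by_cases h : m - k ≤ N
  · have h1 := Nat.choose_mul_factorial_mul_factorial h
    have h2 := Nat.factorial_mul_descFactorial hkm
    have h3 := Nat.factorial_mul_descFactorial (show n - k ≤ N + n - m by omega)
    rw [show N + n - m - (n - k) = N - (m - k) by omega] at h3
    rw [← h1, ← h2, ← h3]
    ring
  · rw [Nat.choose_eq_zero_of_lt (by omega),
      Nat.descFactorial_eq_zero_iff_lt.2 (show N + n - m < n - k by omega)]
    simp

theorem coeff_mul_one_add_X_pow_eq_fallingForm (p : Polynomial ℝ) {N m : ℕ}
    (hm : m ≤ N + p.natDegree) (hT : 0 < N + p.natDegree) :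
    (p * (1 + Polynomial.X) ^ N).coeff m * (m.factorial * (N + p.natDegree - m).factorial) =
      N.factorial * ((N + p.natDegree : ℕ) : ℝ) ^ p.natDegree *
        fallingForm p.coeff p.natDegree (1 / ((N + p.natDegree : ℕ) : ℝ))
          (m / ((N + p.natDegree : ℕ) : ℝ)) := by
  set n := p.natDegree with hn
  set T : ℝ := ((N + n : ℕ) : ℝ) with hTdef
  have hT0 : T ≠ 0 := by rw [hTdef]; exact_mod_cast hT.ne'
  have hfall : ∀ k ∈ range (n + 1), T ^ n * (p.coeff k *
      ((∏ i ∈ range k, ((m : ℝ) / T - i * (1 / T))) *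
        ∏ i ∈ range (n - k), (1 - (m : ℝ) / T - i * (1 / T)))) =
      p.coeff k * ((m.descFactorial k : ℝ) * ((N + n - m).descFactorial (n - k) : ℝ)) := by
    intro k hk
    have hk : k ≤ n := Nat.lt_succ_iff.1 (mem_range.1 hk)
    rw [cast_descFactorial_eq_prod, cast_descFactorial_eq_prod]
    have h1 : T ^ k * ∏ i ∈ range k, ((m : ℝ) / T - i * (1 / T)) =
        ∏ i ∈ range k, ((m : ℝ) - i) := by
      conv_lhs => rw [← card_range k, ← prod_const, card_range, ← prod_mul_distrib]
      refine prod_congr rfl fun i _ => ?_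
      field_simp
    have h2 : T ^ (n - k) * ∏ i ∈ range (n - k), (1 - (m : ℝ) / T - i * (1 / T)) =
        ∏ i ∈ range (n - k), (((N + n - m : ℕ) : ℝ) - i) := by
      conv_lhs => rw [← card_range (n - k), ← prod_const, card_range, ← prod_mul_distrib]
      refine prod_congr rfl fun i _ => ?_
      rw [Nat.cast_sub hm, ← hTdef]
      field_simp
    rw [← h1, ← h2]
    rw [show T ^ n = T ^ k * T ^ (n - k) by rw [← pow_add]; congr 1; omega]
    ring
  rw [mul_assoc, fallingForm, mul_sum, sum_congr rfl hfall, Polynomial.coeff_mul,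
    Nat.sum_antidiagonal_eq_sum_range_succ
      (fun i j => p.coeff i * ((1 + Polynomial.X : Polynomial ℝ) ^ N).coeff j), sum_mul, mul_sum]
  rw [← sum_filter_of_ne (s := range (m + 1)) (p := fun k => k ≤ n),
    ← sum_filter_of_ne (s := range (n + 1)) (p := fun k => k ≤ m)]
  · have : (range (m + 1)).filter (fun k => k ≤ n) = (range (n + 1)).filter (fun k => k ≤ m) := by
      ext k; simp only [mem_filter, mem_range]; omega
    rw [this]
    refine sum_congr rfl fun k hk => ?_
    simp only [mem_filter, mem_range] at hk
    rw [Polynomial.coeff_one_add_X_pow]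
    have h := choose_mul_factorial_mul_factorial_eq (N := N) (n := n) (m := m) (k := k)
      (by omega) hk.2 hm
    have h' : ((N.choose (m - k) : ℝ)) * (m.factorial * (N + n - m).factorial) =
      N.factorial * (m.descFactorial k * (N + n - m).descFactorial (n - k)) := by exact_mod_cast h
    linear_combination p.coeff k * h'
  · intro k _ hne
    by_contra hlt
    rw [Nat.descFactorial_eq_zero_iff_lt.2 (show m < k by omega)] at hne
    simp at hne
  · intro k _ hne
    by_contra hlt
    rw [Polynomial.coeff_eq_zero_of_natDegree_lt (by omega)] at hne
    simp at hne

theorem fallingForm_zero_eq (p : Polynomial ℝ) {x : ℝ} (hx : x < 1) :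
    fallingForm p.coeff p.natDegree 0 x = (1 - x) ^ p.natDegree * p.eval (x / (1 - x)) := by
  have h1 : 1 - x ≠ 0 := by linarith
  rw [fallingForm, Polynomial.eval_eq_sum_range, mul_sum]
  refine sum_congr rfl fun k hk => ?_
  have hk : k ≤ p.natDegree := Nat.lt_succ_iff.1 (mem_range.1 hk)
  simp only [mul_zero, sub_zero, prod_const, card_range]
  obtain ⟨j, hj⟩ := Nat.exists_eq_add_of_le hk
  rw [hj, Nat.add_sub_cancel_left, div_pow, pow_add]
  field_simp

theorem continuous_fallingForm (a : ℕ → ℝ) (n : ℕ) :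
    Continuous fun z : ℝ × ℝ => fallingForm a n z.1 z.2 := by
  unfold fallingForm
  fun_prop

theorem fallingForm_zero_pos {p : Polynomial ℝ} (hp : ∀ z : ℝ, 0 < z → 0 < p.eval z)
    (h0 : p.coeff 0 ≠ 0) {x : ℝ} (hx : x ∈ Set.Icc (0 : ℝ) 1) :
    0 < fallingForm p.coeff p.natDegree 0 x := by
  have hpos : ∀ y ∈ Set.Ioo (0 : ℝ) 1, 0 < fallingForm p.coeff p.natDegree 0 y := by
    intro y hy
    rw [fallingForm_zero_eq p hy.2]
    have := hy.1; have := hy.2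
    exact mul_pos (pow_pos (by linarith) _) (hp _ (div_pos hy.1 (by linarith)))
  have hcont : Continuous fun y : ℝ => fallingForm p.coeff p.natDegree 0 y :=
    (continuous_fallingForm p.coeff p.natDegree).comp
      (by fun_prop : Continuous fun y : ℝ => ((0 : ℝ), y))
  have hnonneg : 0 ≤ fallingForm p.coeff p.natDegree 0 x := by
    have hcl : closure (Set.Ioo (0 : ℝ) 1) = Set.Icc 0 1 := closure_Ioo (by norm_num)
    have : x ∈ closure (Set.Ioo (0 : ℝ) 1) := hcl ▸ hx
    exact closure_minimal (fun y hy => (hpos y hy).le)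
      (isClosed_le continuous_const hcont) this
  rcases eq_or_lt_of_le hx.1 with h | h
  · refine lt_of_le_of_ne hnonneg ?_
    rw [← h, fallingForm_zero_eq p one_pos]
    simpa [← Polynomial.coeff_zero_eq_eval_zero] using h0.symm
  rcases eq_or_lt_of_le hx.2 with h' | h'
  · refine lt_of_le_of_ne hnonneg ?_
    have : fallingForm p.coeff p.natDegree 0 1 = p.leadingCoeff := by
      rw [fallingForm, sum_range_succ, sum_eq_zero]
      · simp
      · intro k hk
        have : p.natDegree - k ≠ 0 := by have := mem_range.1 hk; omega
        simp [this]
    rw [h', this]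
    intro hlc
    rw [Polynomial.leadingCoeff_eq_zero.1 hlc.symm] at h0
    simp at h0
  · exact hpos x ⟨h, h'⟩

theorem eventually_coeff_mul_one_add_X_pow_nonneg_of_coeff_zero_ne_zero {p : Polynomial ℝ}
    (hp : ∀ z : ℝ, 0 < z → 0 < p.eval z) (h0 : p.coeff 0 ≠ 0) :
    ∀ᶠ N : ℕ in atTop, ∀ m, 0 ≤ (p * (1 + Polynomial.X) ^ N).coeff m := by
  have hev : ∀ᶠ δ : ℝ in 𝓝 0, ∀ x ∈ Set.Icc (0 : ℝ) 1, 0 < fallingForm p.coeff p.natDegree δ x :=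
    isCompact_Icc.eventually_forall_of_forall_eventually fun x hx =>
      (continuous_fallingForm p.coeff p.natDegree).continuousAt.eventually_const_lt
        (fallingForm_zero_pos hp h0 hx)
  have hlim : Tendsto (fun N : ℕ => 1 / ((N + p.natDegree : ℕ) : ℝ)) atTop (𝓝 0) :=
    (tendsto_const_div_atTop_nhds_zero_nat 1).comp (tendsto_add_atTop_nat p.natDegree)
  filter_upwards [hlim.eventually hev, eventually_gt_atTop 0] with N hN hN0 m
  rcases le_or_gt m (N + p.natDegree) with hm | hm
  · have hT : 0 < N + p.natDegree := by omega
    have hTr : (0 : ℝ) < ((N + p.natDegree : ℕ) : ℝ) := by exact_mod_cast hT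
    have h := coeff_mul_one_add_X_pow_eq_fallingForm p hm hT
    have hx := hN (m / ((N + p.natDegree : ℕ) : ℝ))
      ⟨by positivity, by rw [div_le_one hTr]; exact_mod_cast hm⟩
    refine nonneg_of_mul_nonneg_left (b := (m.factorial * (N + p.natDegree - m).factorial : ℝ)) ?_
      (by positivity)
    rw [h]
    positivity
  · refine (Polynomial.coeff_eq_zero_of_natDegree_lt (lt_of_le_of_lt ?_ hm)).ge
    refine Polynomial.natDegree_mul_le.trans ?_
    have : ((1 + Polynomial.X : Polynomial ℝ) ^ N).natDegree ≤ N := by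
      refine Polynomial.natDegree_pow_le.trans ?_
      have : (1 + Polynomial.X : Polynomial ℝ).natDegree ≤ 1 := by
        rw [add_comm]; exact (Polynomial.natDegree_X_add_C (1 : ℝ)).le
      nlinarith
    omega

/-- **Pólya's theorem** in one variable: if a real polynomial is positive on `(0, ∞)`, its product
with a sufficiently high power of `1 + X` has nonnegative coefficients. -/
theorem eventually_coeff_mul_one_add_X_pow_nonneg {p : Polynomial ℝ}
    (hp : ∀ z : ℝ, 0 < z → 0 < p.eval z) :
    ∀ᶠ N : ℕ in atTop, ∀ m, 0 ≤ (p * (1 + Polynomial.X) ^ N).coeff m := by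
  have hp0 : p ≠ 0 := by
    rintro rfl
    simpa using hp 1 one_pos
  obtain ⟨q, hq, hX⟩ := p.exists_eq_pow_rootMultiplicity_mul_and_not_dvd hp0 0
  rw [map_zero, sub_zero] at hq hX
  rw [Polynomial.X_dvd_iff] at hX
  set r := p.rootMultiplicity 0
  have hqpos : ∀ z : ℝ, 0 < z → 0 < q.eval z := by
    intro z hz
    have := hp z hz
    rw [hq] at this
    simp only [Polynomial.eval_mul, Polynomial.eval_pow, Polynomial.eval_X] at this
    exact pos_of_mul_pos_right this (by positivity)
  filter_upwards [eventually_coeff_mul_one_add_X_pow_nonneg_of_coeff_zero_ne_zero hqpos hX]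
    with N hN m
  rw [hq, mul_assoc, Polynomial.coeff_X_pow_mul']
  split_ifs
  · exact hN _
  · exact le_rfl

section Majorization

variable {ι κ : Type*} [Fintype ι] [DecidableEq ι] [Fintype κ] [DecidableEq κ]

theorem sum_le_topSum (x : ι → ℝ) {s : Finset ι} {k : ℕ} (hs : #s ≤ k) :
    ∑ i ∈ s, x i ≤ topSum x k :=
  le_sup' (fun s => ∑ i ∈ s, x i) (by simpa using hs)

theorem topSum_le_iff (x : ι → ℝ) {k : ℕ} {a : ℝ} :
    topSum x k ≤ a ↔ ∀ s : Finset ι, #s ≤ k → ∑ i ∈ s, x i ≤ a := by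
  simp [topSum, sup'_le_iff]

theorem sum_sub_le_sum_max {ι : Type*} [Fintype ι] (x : ι → ℝ) (s : Finset ι) (t : ℝ) :
    ∑ i ∈ s, x i - #s * t ≤ ∑ i, max (x i - t) 0 := by
  calc ∑ i ∈ s, x i - #s * t = ∑ i ∈ s, (x i - t) := by simp [sum_sub_distrib]
    _ ≤ ∑ i ∈ s, max (x i - t) 0 := sum_le_sum fun i _ => le_max_left _ _
    _ ≤ ∑ i, max (x i - t) 0 :=
      sum_le_sum_of_subset_of_nonneg (subset_univ s) fun i _ _ => le_max_right _ _

theorem PMaj.sum_max_le {x : ι → ℝ} {y : κ → ℝ} (h : PMaj x y) {t : ℝ} (ht : 0 ≤ t) :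
    ∑ i, max (x i - t) 0 ≤ ∑ j, max (y j - t) 0 := by
  set s := univ.filter fun i => t < x i with hs
  have hx : ∑ i, max (x i - t) 0 = ∑ i ∈ s, x i - #s * t := by
    rw [← nsmul_eq_mul, ← sum_const, ← sum_sub_distrib, hs, sum_filter]
    refine sum_congr rfl fun i _ => ?_
    split_ifs with hi
    · exact max_eq_left (by linarith)
    · exact max_eq_right (by linarith)
  have hy : topSum y #s ≤ ∑ j, max (y j - t) 0 + #s * t := by
    rw [topSum_le_iff]
    intro s' hs'
    have h1 := sum_sub_le_sum_max y s' t
    have h2 : (#s' : ℝ) * t ≤ #s * t := by gcongr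
    linarith
  have h1 := sum_le_topSum x (le_refl #s)
  have h2 := h.1 #s
  linarith

theorem exists_card_eq_forall_notMem_le (y : κ → ℝ) {k : ℕ} (hk : k ≤ Fintype.card κ) :
    ∃ s : Finset κ, #s = k ∧ ∀ i ∈ s, ∀ j ∉ s, y j ≤ y i := by
  induction k with
  | zero => exact ⟨∅, by simp⟩
  | succ k ih =>
    obtain ⟨s, hs, hle⟩ := ih (by omega)
    have hne : sᶜ.Nonempty := by
      rw [← card_pos, card_compl]; omega
    obtain ⟨a, ha, hmax⟩ := exists_max_image sᶜ y hne
    rw [mem_compl] at ha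
    refine ⟨insert a s, by rw [card_insert_of_notMem ha, hs], ?_⟩
    intro i hi j hj
    rw [mem_insert, not_or] at hj
    rcases mem_insert.1 hi with rfl | hi
    · exact hmax j (by simpa using hj.2)
    · exact hle i hi j hj.2

theorem pMaj_of_sum_max_le {x : ι → ℝ} {y : κ → ℝ} (hx : ∀ i, 0 ≤ x i) (hy : ∀ j, 0 ≤ y j)
    (hsum : ∑ i, x i = ∑ j, y j)
    (h : ∀ j₀, ∑ i, max (x i - y j₀) 0 ≤ ∑ j, max (y j - y j₀) 0) : PMaj x y := by
  refine ⟨fun k => ?_, hsum⟩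
  rw [topSum_le_iff]
  intro s hs
  rcases Nat.eq_zero_or_pos k with rfl | hk0
  · rw [card_eq_zero.1 (Nat.le_zero.1 hs)]
    simpa using sum_le_topSum y (s := ∅) (k := 0) (by simp)
  rcases le_or_gt k (Fintype.card κ) with hk | hk
  · obtain ⟨T, hT, hle⟩ := exists_card_eq_forall_notMem_le y hk
    obtain ⟨j₀, hj₀, hmin⟩ := exists_min_image T y (card_pos.1 (by omega))
    have h1 := sum_sub_le_sum_max x s (y j₀)
    have h2 : ∑ j, max (y j - y j₀) 0 = ∑ j ∈ T, y j - k * y j₀ := by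
      rw [← hT, ← nsmul_eq_mul, ← sum_const, ← sum_sub_distrib]
      symm
      refine (sum_congr rfl fun j hj => ?_).trans (sum_subset (subset_univ T) fun j _ hj => ?_)
      · exact (max_eq_left (by linarith [hmin j hj])).symm
      · exact max_eq_right (by linarith [hle j₀ hj₀ j hj])
    have h3 : (#s : ℝ) * y j₀ ≤ k * y j₀ :=
      mul_le_mul_of_nonneg_right (by exact_mod_cast hs) (hy j₀)
    have h4 := sum_le_topSum y hT.le
    linarith [h j₀]
  · calc ∑ i ∈ s, x i ≤ ∑ i, x i :=
          sum_le_sum_of_subset_of_nonneg (subset_univ s) fun i _ _ => hx i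
      _ = ∑ j, y j := hsum
      _ ≤ topSum y k := sum_le_topSum y (by simpa using hk.le)

end Majorization

section RiemannSums

/-- Left Riemann sums with uniform step converge uniformly for a compact family of continuous
functions supported in a fixed interval. -/
theorem exists_abs_riemannSum_sub_integral_le {G : ℝ → ℝ → ℝ} {A B : ℝ} {P : Set ℝ}
    (hAB : A ≤ B) (hP : IsCompact P) (hG : Continuous fun z : ℝ × ℝ => G z.1 z.2)
    (hA : ∀ p, ∀ u ≤ A, G p u = 0) (hB : ∀ p, ∀ u ≥ B, G p u = 0) {η : ℝ} (hη : 0 < η) :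
    ∃ ε₀ > 0, ∀ ε, 0 < ε → ε < ε₀ → ∀ s n, A - 1 ≤ s → s ≤ A → B ≤ s + (n : ℕ) * ε →
      s + n * ε ≤ B + 1 → ∀ p ∈ P,
        |ε * ∑ i ∈ range n, G p (s + i * ε) - ∫ u in A..B, G p u| ≤ η := by
  have hlen : 0 < B - A + 2 := by linarith
  have hη' : 0 < η / (B - A + 2) := by positivity
  have hK : IsCompact (P ×ˢ Set.Icc (A - 1) (B + 1)) := hP.prod isCompact_Icc
  obtain ⟨ε₀, hε₀, hunif⟩ := Metric.uniformContinuousOn_iff.1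
    (hK.uniformContinuousOn_of_continuous hG.continuousOn) _ hη'
  refine ⟨ε₀, hε₀, fun ε hε hεlt s n hs1 hs2 hn1 hn2 p hp => ?_⟩
  have hGp : Continuous (G p) := hG.comp (by fun_prop : Continuous fun u : ℝ => (p, u))
  have hsupp : ∀ a b, a ≤ A → B ≤ b → ∫ u in a..b, G p u = ∫ u, G p u := by
    intro a b ha hb
    refine intervalIntegral.integral_eq_integral_of_support_subset fun u hu => ?_
    constructor
    · by_contra hlt
      exact hu (hA p u (by linarith))
    · by_contra hlt
      exact hu (hB p u (by linarith))
  have hint : ∫ u in A..B, G p u =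
      ∑ i ∈ range n, ∫ u in (s + i * ε)..(s + (i + 1 : ℕ) * ε), G p u := by
    rw [intervalIntegral.sum_integral_adjacent_intervals (a := fun i : ℕ => s + i * ε)
      (fun i _ => hGp.intervalIntegrable _ _), hsupp A B le_rfl le_rfl]
    exact (hsupp _ _ (by simpa using hs2) hn1).symm
  have hterm : ∀ i ∈ range n,
      |ε * G p (s + i * ε) - ∫ u in (s + i * ε)..(s + (i + 1 : ℕ) * ε), G p u| ≤
        η / (B - A + 2) * ε := by
    intro i hi
    have hi : i + 1 ≤ n := mem_range.1 hi
    have hstep : s + (i + 1 : ℕ) * ε - (s + i * ε) = ε := by push_cast; ring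
    have hin : s + (i + 1 : ℕ) * ε ≤ s + n * ε := by gcongr
    have hi0 : (0 : ℝ) ≤ i * ε := by positivity
    have hconst : ε * G p (s + i * ε) =
        ∫ u in (s + i * ε)..(s + (i + 1 : ℕ) * ε), G p (s + i * ε) := by
      rw [intervalIntegral.integral_const, hstep, smul_eq_mul]
    rw [hconst, ← intervalIntegral.integral_sub (by simp) (hGp.intervalIntegrable _ _),
      ← Real.norm_eq_abs]
    refine (intervalIntegral.norm_integral_le_of_norm_le_const
      (C := η / (B - A + 2)) fun u hu => ?_).trans ?_
    · rw [Set.uIoc_of_le (by linarith)] at hu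
      have hu1 := hu.1
      have hu2 := hu.2
      have := hunif (p, s + i * ε) ⟨hp, by constructor <;> linarith⟩ (p, u)
        ⟨hp, by constructor <;> linarith⟩ (by
          rw [Prod.dist_eq, dist_self, Real.dist_eq, abs_sub_comm, abs_of_pos (by linarith)]
          exact max_lt hε₀ (by linarith))
      rw [Real.dist_eq] at this
      exact this.le
    · rw [hstep, abs_of_pos hε]
  rw [hint, mul_sum, ← sum_sub_distrib]
  refine (abs_sum_le_sum_abs _ _).trans ((sum_le_sum hterm).trans ?_)
  rw [sum_const, card_range, nsmul_eq_mul]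
  have : n * ε ≤ B - A + 2 := by linarith
  calc (n : ℝ) * (η / (B - A + 2) * ε) = η / (B - A + 2) * (n * ε) := by ring
    _ ≤ η / (B - A + 2) * (B - A + 2) := by gcongr
    _ = η := by field_simp

theorem exists_riemannSum_pos {G : ℝ → ℝ → ℝ} {A B : ℝ} {P : Set ℝ}
    (hAB : A ≤ B) (hP : IsCompact P) (hG : Continuous fun z : ℝ × ℝ => G z.1 z.2)
    (hA : ∀ p, ∀ u ≤ A, G p u = 0) (hB : ∀ p, ∀ u ≥ B, G p u = 0)
    (hpos : ∀ p ∈ P, 0 < ∫ u in A..B, G p u) :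
    ∃ ε₀ > 0, ∀ ε, 0 < ε → ε < ε₀ → ∀ s n, A - 1 ≤ s → s ≤ A → B ≤ s + (n : ℕ) * ε →
      s + n * ε ≤ B + 1 → ∀ p ∈ P, 0 < ∑ i ∈ range n, G p (s + i * ε) := by
  have hcont : Continuous fun p => ∫ u in A..B, G p u :=
    intervalIntegral.continuous_parametric_intervalIntegral_of_continuous' hG A B
  obtain ⟨μ, hμ, hle⟩ : ∃ μ > 0, ∀ p ∈ P, μ ≤ ∫ u in A..B, G p u := by
    rcases P.eq_empty_or_nonempty with rfl | hne
    · exact ⟨1, one_pos, by simp⟩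
    · obtain ⟨p₀, hp₀, hmin⟩ := hP.exists_isMinOn hne hcont.continuousOn
      exact ⟨_, hpos p₀ hp₀, fun p hp => hmin hp⟩
  obtain ⟨ε₀, hε₀, h⟩ := exists_abs_riemannSum_sub_integral_le hAB hP hG hA hB (half_pos hμ)
  refine ⟨ε₀, hε₀, fun ε hε hlt s n h1 h2 h3 h4 p hp => ?_⟩
  have := (abs_le.1 (h ε hε hlt s n h1 h2 h3 h4 p hp)).1
  have := hle p hp
  exact pos_of_mul_pos_right (a := ε) (by linarith) hε.le

/-- Exponentially weighted Riemann sums of a function that is nonnegative beyond `b` in the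
direction `σ`, and positive somewhere there, are positive for all large exponents. -/
theorem exists_riemannSum_exp_pos_of_tail {h : ℝ → ℝ} {A B b σ : ℝ} (hh : Continuous h)
    (hAB : A < B) (hA : ∀ u ≤ A, h u = 0) (hB : ∀ u ≥ B, h u = 0)
    (htail : ∀ u, 0 ≤ σ * (u - b) → 0 ≤ h u) (hpos : ∃ u, 0 < σ * (u - b) ∧ 0 < h u) :
    ∃ γ₀ : ℝ, ∃ ε₀ > 0, ∀ ε, 0 < ε → ε < ε₀ → ∀ s n, A - 1 ≤ s → s ≤ A →
      B ≤ s + (n : ℕ) * ε → s + n * ε ≤ B + 1 → ∀ γ ≥ γ₀,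
        0 < ∑ i ∈ range n, h (s + i * ε) * Real.exp (γ * (σ * (s + i * ε - b))) := by
  set l : ℝ → ℝ := fun u => max (σ * (u - b)) 0 with hl
  set g : ℝ → ℝ := fun u => min (h u) (l u) with hg
  have hlc : Continuous l := by fun_prop
  have hgc : Continuous g := hh.min hlc
  have hl0 : ∀ u, 0 ≤ l u := fun u => le_max_right _ _
  have hgA : ∀ u ≤ A, g u = 0 := fun u hu => by simp [hg, hA u hu, hl0]
  have hgB : ∀ u ≥ B, g u = 0 := fun u hu => by simp [hg, hB u hu, hl0]
  have hright : ∀ u, 0 ≤ σ * (u - b) → 0 ≤ g u ∧ l u = σ * (u - b) := fun u hu =>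
    ⟨le_min (htail u hu) (hl0 u), max_eq_left hu⟩
  have hleft : ∀ u, σ * (u - b) ≤ 0 → g u ≤ 0 ∧ l u = 0 := fun u hu =>
    ⟨(min_le_right _ _).trans (max_eq_right hu).le, max_eq_right hu⟩
  have hqpos : 0 < ∫ u in A..B, g u * l u := by
    refine intervalIntegral.integral_pos hAB (hgc.mul hlc).continuousOn (fun u _ => ?_) ?_
    · rcases le_total 0 (σ * (u - b)) with hu | hu
      · exact mul_nonneg (hright u hu).1 (hl0 u)
      · rw [(hleft u hu).2, mul_zero]
    · obtain ⟨u, hu1, hu2⟩ := hpos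
      refine ⟨u, ⟨?_, ?_⟩, ?_⟩
      · by_contra hlt
        exact hu2.ne' (hA u (by linarith))
      · by_contra hlt
        exact hu2.ne' (hB u (by linarith))
      · have : 0 < l u := lt_max_of_lt_left hu1
        exact mul_pos (lt_min hu2 this) this
  obtain ⟨γ, hγ0, hγ⟩ : ∃ γ : ℝ, 0 ≤ γ ∧
      0 < γ * (∫ u in A..B, g u * l u) + ∫ u in A..B, min (g u) 0 := by
    set q := ∫ u in A..B, g u * l u
    set m := ∫ u in A..B, min (g u) 0
    refine ⟨(|m| + 1) / q, by positivity, ?_⟩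
    rw [div_mul_cancel₀ _ hqpos.ne']
    linarith [neg_abs_le m]
  have hint : 0 < ∫ u in A..B, g u * Real.exp (γ * (σ * (u - b))) := by
    refine hγ.trans_le ?_
    rw [← intervalIntegral.integral_const_mul, ← intervalIntegral.integral_add
      (Continuous.intervalIntegrable (by fun_prop) _ _)
      (Continuous.intervalIntegrable (by fun_prop) _ _)]
    refine intervalIntegral.integral_mono_on hAB.le
      (Continuous.intervalIntegrable (by fun_prop) _ _)
      (Continuous.intervalIntegrable (by fun_prop) _ _) fun u _ => ?_
    rcases le_total 0 (σ * (u - b)) with hu | hu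
    · obtain ⟨h1, h2⟩ := hright u hu
      rw [h2, min_eq_right h1]
      have := Real.add_one_le_exp (γ * (σ * (u - b)))
      nlinarith
    · obtain ⟨h1, h2⟩ := hleft u hu
      rw [h2, min_eq_left h1]
      have : Real.exp (γ * (σ * (u - b))) ≤ 1 :=
        Real.exp_le_one_iff.2 (mul_nonpos_of_nonneg_of_nonpos hγ0 hu)
      nlinarith
  obtain ⟨ε₀, hε₀, H⟩ := exists_riemannSum_pos
    (G := fun _ u => g u * Real.exp (γ * (σ * (u - b)))) (P := {0}) hAB.le isCompact_singleton
    (by fun_prop) (fun _ u hu => by simp [hgA u hu]) (fun _ u hu => by simp [hgB u hu])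
    (fun _ _ => hint)
  refine ⟨γ, ε₀, hε₀, fun ε hε hlt s n h1 h2 h3 h4 γ' hγ' => ?_⟩
  refine (H ε hε hlt s n h1 h2 h3 h4 0 rfl).trans_le (sum_le_sum fun i _ => ?_)
  set u := s + i * ε
  have hgh : g u ≤ h u := min_le_left _ _
  refine le_trans ?_ (mul_le_mul_of_nonneg_right hgh (Real.exp_pos _).le)
  rcases le_total 0 (σ * (u - b)) with hu | hu
  · exact mul_le_mul_of_nonneg_left (Real.exp_le_exp.2 (by gcongr)) (hright u hu).1
  · exact mul_le_mul_of_nonpos_left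
      (Real.exp_le_exp.2 (mul_le_mul_of_nonpos_right hγ' hu)) (hleft u hu).1

theorem exists_riemannSum_exp_pos {h : ℝ → ℝ} {A B a b : ℝ} (hh : Continuous h)
    (hAB : A < B) (hA : ∀ u ≤ A, h u = 0) (hB : ∀ u ≥ B, h u = 0)
    (hleft : ∀ u ≤ a, 0 ≤ h u) (hleft' : ∃ u < a, 0 < h u)
    (hright : ∀ u ≥ b, 0 ≤ h u) (hright' : ∃ u > b, 0 < h u)
    (hint : ∀ β : ℝ, 0 < ∫ u in A..B, h u * Real.exp (β * u)) :
    ∃ ε₀ > 0, ∀ ε, 0 < ε → ε < ε₀ → ∀ s n, A - 1 ≤ s → s ≤ A →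
      B ≤ s + (n : ℕ) * ε → s + n * ε ≤ B + 1 → ∀ β : ℝ,
        0 < ∑ i ∈ range n, h (s + i * ε) * Real.exp (β * (s + i * ε)) := by
  obtain ⟨γ₁, ε₁, hε₁, H₁⟩ := exists_riemannSum_exp_pos_of_tail (σ := 1) (b := b) hh hAB hA hB
    (fun u hu => hright u (by linarith))
    (by obtain ⟨u, hu, hu'⟩ := hright'; exact ⟨u, by linarith, hu'⟩)
  obtain ⟨γ₂, ε₂, hε₂, H₂⟩ := exists_riemannSum_exp_pos_of_tail (σ := -1) (b := a) hh hAB hA hB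
    (fun u hu => hleft u (by linarith))
    (by obtain ⟨u, hu, hu'⟩ := hleft'; exact ⟨u, by linarith, hu'⟩)
  obtain ⟨ε₃, hε₃, H₃⟩ := exists_riemannSum_pos (G := fun β u => h u * Real.exp (β * u))
    (P := Set.Icc (-γ₂) γ₁) hAB.le isCompact_Icc (by fun_prop)
    (fun _ u hu => by simp [hA u hu]) (fun _ u hu => by simp [hB u hu]) (fun β _ => hint β)
  refine ⟨min ε₁ (min ε₂ ε₃), by positivity, fun ε hε hlt s n h1 h2 h3 h4 β => ?_⟩
  rw [lt_min_iff, lt_min_iff] at hlt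
  have hshift : ∀ c : ℝ, ∑ i ∈ range n, h (s + i * ε) * Real.exp (β * (s + i * ε)) =
      Real.exp (β * c) * ∑ i ∈ range n, h (s + i * ε) * Real.exp (β * (s + i * ε - c)) := by
    intro c
    rw [mul_sum]
    refine sum_congr rfl fun i _ => ?_
    rw [mul_left_comm, ← Real.exp_add]
    congr 2
    ring
  rcases le_total γ₁ β with hβ | hβ
  · rw [hshift b]
    have := H₁ ε hε hlt.1 s n h1 h2 h3 h4 β hβ
    simp only [one_mul] at this
    positivity
  rcases le_total β (-γ₂) with hβ' | hβ'
  · rw [hshift a]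
    have := H₂ ε hε hlt.2.1 s n h1 h2 h3 h4 (-β) (by linarith)
    simp only [neg_mul, one_mul, mul_neg, neg_neg] at this
    positivity
  · exact H₃ ε hε hlt.2.2 s n h1 h2 h3 h4 β ⟨hβ', hβ⟩

end RiemannSums

section HingeSums

/-- The function on `(0, ∞)` with second derivative `v ^ (α - 2)` that underlies `fAlpha`. -/
noncomputable def powKernel (α v : ℝ) : ℝ :=
  if α = 1 then v * Real.log v else if α = 0 then -Real.log v else v ^ α / (α * (α - 1))

/-- The signed sum of hinge functions `t ↦ max (pᵢ - t) 0` with weights `wᵢ`. -/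
noncomputable def hingeSum {ι : Type*} (s : Finset ι) (w p : ι → ℝ) (t : ℝ) : ℝ :=
  ∑ i ∈ s, w i * max (p i - t) 0

theorem exists_antideriv_powKernel (α : ℝ) :
    ∃ q r : ℝ → ℝ, (∀ u, HasDerivAt q (Real.exp ((α - 1) * u)) u) ∧
      (∀ u, HasDerivAt r (q u * Real.exp u) u) ∧
      ∀ v, 0 < v → r (Real.log v) = powKernel α v := by
  have hexp : ∀ c u : ℝ, HasDerivAt (fun u => Real.exp (c * u)) (Real.exp (c * u) * c) u :=
    fun c u => by simpa using ((hasDerivAt_id u).const_mul c).exp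
  by_cases h1 : α = 1
  · refine ⟨fun u => u + 1, fun u => u * Real.exp u, fun u => ?_, fun u => ?_, fun v hv => ?_⟩
    · simpa [h1] using (hasDerivAt_id u).add_const 1
    · exact ((hasDerivAt_id u).mul (Real.hasDerivAt_exp u)).congr_deriv (by simp; ring)
    · simp [powKernel, h1, Real.exp_log hv, mul_comm]
  by_cases h0 : α = 0
  · refine ⟨fun u => -Real.exp (-1 * u), fun u => -u, fun u => ?_, fun u => ?_, fun v hv => ?_⟩
    · exact (hexp (-1) u).neg.congr_deriv (by simp [h0])
    · refine (hasDerivAt_id u).neg.congr_deriv ?_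
      rw [neg_mul, ← Real.exp_add]
      simp
    · simp [powKernel, h0]
  have h1' : α - 1 ≠ 0 := sub_ne_zero.2 h1
  refine ⟨fun u => Real.exp ((α - 1) * u) / (α - 1), fun u => Real.exp (α * u) / (α * (α - 1)),
    fun u => ?_, fun u => ?_, fun v hv => ?_⟩
  · exact ((hexp (α - 1) u).div_const (α - 1)).congr_deriv (by field_simp)
  · refine ((hexp α u).div_const (α * (α - 1))).congr_deriv ?_
    rw [div_mul_eq_mul_div, ← Real.exp_add, show (α - 1) * u + u = α * u by ring]
    field_simp
  · simp only [powKernel, h1, h0, if_false]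
    rw [Real.rpow_def_of_pos hv, mul_comm]

theorem exists_integral_max_sub_exp_eq (α A B : ℝ) :
    ∃ c₀ c₁ : ℝ, ∀ v, 0 < v → A ≤ Real.log v → Real.log v ≤ B →
      ∫ u in A..B, max (v - Real.exp u) 0 * Real.exp ((α - 1) * u) =
        powKernel α v + c₀ + c₁ * v := by
  obtain ⟨q, r, hq, hr, hrv⟩ := exists_antideriv_powKernel α
  refine ⟨Real.exp A * q A - r A, -q A, fun v hv hA hB => ?_⟩
  have hcont : Continuous fun u => max (v - Real.exp u) 0 * Real.exp ((α - 1) * u) := by fun_prop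
  rw [← intervalIntegral.integral_add_adjacent_intervals
    (hcont.intervalIntegrable A (Real.log v)) (hcont.intervalIntegrable (Real.log v) B)]
  have h1 : ∫ u in A..Real.log v, max (v - Real.exp u) 0 * Real.exp ((α - 1) * u) =
      ∫ u in A..Real.log v, (v - Real.exp u) * Real.exp ((α - 1) * u) := by
    refine intervalIntegral.integral_congr fun u hu => ?_
    rw [Set.uIcc_of_le hA] at hu
    have : Real.exp u ≤ v := (Real.le_log_iff_exp_le hv).1 hu.2
    simp only [max_eq_left (sub_nonneg.2 this)]
  have h2 : ∫ u in Real.log v..B, max (v - Real.exp u) 0 * Real.exp ((α - 1) * u) = 0 := by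
    refine (intervalIntegral.integral_congr (g := fun _ => (0 : ℝ)) fun u hu => ?_).trans (by simp)
    rw [Set.uIcc_of_le hB] at hu
    have : v ≤ Real.exp u := (Real.log_le_iff_le_exp hv).1 hu.1
    simp only [max_eq_right (sub_nonpos.2 this), zero_mul]
  have h3 : ∫ u in A..Real.log v, (v - Real.exp u) * Real.exp ((α - 1) * u) =
      ((v - Real.exp (Real.log v)) * q (Real.log v) + r (Real.log v)) -
        ((v - Real.exp A) * q A + r A) := by
    refine intervalIntegral.integral_eq_sub_of_hasDerivAt
      (f := fun u => (v - Real.exp u) * q u + r u) (fun u _ => ?_)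
      (Continuous.intervalIntegrable (by fun_prop) _ _)
    exact ((((Real.hasDerivAt_exp u).const_sub v).mul (hq u)).add (hr u)).congr_deriv (by ring)
  rw [h1, h2, h3, Real.exp_log hv, hrv v hv]
  ring

variable {ι : Type*} {s : Finset ι} {w p : ι → ℝ}

theorem continuous_hingeSum (s : Finset ι) (w p : ι → ℝ) : Continuous (hingeSum s w p) := by
  unfold hingeSum
  fun_prop

/-- The Mellin transform of a hinge sum, in logarithmic coordinates. -/
theorem integral_hingeSum_exp (hp : ∀ i ∈ s, 0 < p i) (hw : ∑ i ∈ s, w i = 0)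
    (hwp : ∑ i ∈ s, w i * p i = 0) {A B : ℝ} (hA : ∀ i ∈ s, A ≤ Real.log (p i))
    (hB : ∀ i ∈ s, Real.log (p i) ≤ B) (α : ℝ) :
    ∫ u in A..B, hingeSum s w p (Real.exp u) * Real.exp ((α - 1) * u) =
      ∑ i ∈ s, w i * powKernel α (p i) := by
  obtain ⟨c₀, c₁, hc⟩ := exists_integral_max_sub_exp_eq α A B
  simp only [hingeSum, sum_mul, mul_assoc]
  rw [intervalIntegral.integral_finsetSum
    fun i _ => Continuous.intervalIntegrable (by fun_prop) _ _]
  have : ∀ i ∈ s, ∫ u in A..B, w i * (max (p i - Real.exp u) 0 * Real.exp ((α - 1) * u)) =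
      w i * powKernel α (p i) + w i * c₀ + w i * p i * c₁ := by
    intro i hi
    rw [intervalIntegral.integral_const_mul, hc _ (hp i hi) (hA i hi) (hB i hi)]
    ring
  rw [sum_congr rfl this, sum_add_distrib, sum_add_distrib, ← sum_mul, ← sum_mul, hw, hwp]
  ring

theorem hingeSum_eq_sum_max_sub (hw : ∑ i ∈ s, w i = 0) (hwp : ∑ i ∈ s, w i * p i = 0) (t : ℝ) :
    hingeSum s w p t = ∑ i ∈ s, w i * max (t - p i) 0 := by
  have : ∀ i ∈ s, w i * max (p i - t) 0 = w i * max (t - p i) 0 + (w i * p i - w i * t) := by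
    intro i _
    rcases le_total (p i) t with h | h
    · rw [max_eq_right (by linarith), max_eq_left (by linarith)]; ring
    · rw [max_eq_left (by linarith), max_eq_right (by linarith)]; ring
  rw [hingeSum, sum_congr rfl this, sum_add_distrib, sum_sub_distrib, ← sum_mul, hw, hwp]
  ring

theorem hingeSum_eq_zero_of_ge {t : ℝ} (ht : ∀ i ∈ s, p i ≤ t) : hingeSum s w p t = 0 :=
  sum_eq_zero fun i hi => by rw [max_eq_right (sub_nonpos.2 (ht i hi)), mul_zero]

theorem hingeSum_eq_zero_of_le (hw : ∑ i ∈ s, w i = 0) (hwp : ∑ i ∈ s, w i * p i = 0) {t : ℝ}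
    (ht : ∀ i ∈ s, t ≤ p i) : hingeSum s w p t = 0 := by
  rw [hingeSum_eq_sum_max_sub hw hwp]
  exact sum_eq_zero fun i hi => by rw [max_eq_right (sub_nonpos.2 (ht i hi)), mul_zero]

theorem sum_mul_powKernel_mul (hp : ∀ i ∈ s, 0 < p i) (hw : ∑ i ∈ s, w i = 0)
    (hwp : ∑ i ∈ s, w i * p i = 0) {c : ℝ} (hc : 0 < c) (α : ℝ) :
    ∑ i ∈ s, w i * powKernel α (p i * c) = c ^ α * ∑ i ∈ s, w i * powKernel α (p i) := by
  unfold powKernel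
  by_cases h1 : α = 1
  · subst h1
    have : ∀ i ∈ s, w i * (p i * c * Real.log (p i * c)) =
        c * (w i * (p i * Real.log (p i))) + w i * p i * (c * Real.log c) := by
      intro i hi
      rw [Real.log_mul (hp i hi).ne' hc.ne']
      ring
    simp only [if_true]
    rw [sum_congr rfl this, sum_add_distrib, ← sum_mul, hwp, ← mul_sum, Real.rpow_one]
    ring
  by_cases h0 : α = 0
  · subst h0
    have : ∀ i ∈ s, w i * -Real.log (p i * c) = w i * -Real.log (p i) + w i * -Real.log c := by
      intro i hi
      rw [Real.log_mul (hp i hi).ne' hc.ne']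
      ring
    simp only [zero_ne_one, if_false, if_true]
    rw [sum_congr rfl this, sum_add_distrib, ← sum_mul, hw, Real.rpow_zero]
    ring
  simp only [h1, h0, if_false]
  rw [mul_sum]
  refine sum_congr rfl fun i hi => ?_
  rw [Real.mul_rpow (hp i hi).le hc.le]
  ring

theorem tendsto_sum_mul_rpow {ι : Type*} [DecidableEq ι] {s : Finset ι} {w r : ι → ℝ} {i₀ : ι}
    (hi₀ : i₀ ∈ s) (hr₀ : r i₀ = 1) (hr : ∀ i ∈ s, i ≠ i₀ → 0 < r i ∧ r i < 1) :
    Tendsto (fun γ : ℝ => ∑ i ∈ s, w i * r i ^ γ) atTop (𝓝 (w i₀)) := by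
  have : w i₀ = ∑ i ∈ s, w i * if i = i₀ then 1 else 0 := by simp [hi₀]
  rw [this]
  refine tendsto_finsetSum _ fun i hi => ?_
  refine Tendsto.const_mul _ ?_
  split_ifs with h
  · refine tendsto_const_nhds.congr fun γ => ?_
    rw [h, hr₀, Real.one_rpow]
  · obtain ⟨h0, h1⟩ := hr i hi h
    exact tendsto_rpow_atTop_of_base_lt_one _ (by linarith) h1

end HingeSums

section ValueWeights

variable {V : Finset ℝ} {w : ℝ → ℝ}

theorem tendsto_sum_mul_div_max_rpow (hV : ∀ v ∈ V, 0 < v) {M : ℝ} (hM : M ∈ V)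
    (hmax : ∀ v ∈ V, v ≤ M) :
    Tendsto (fun γ : ℝ => ∑ v ∈ V, w v * (v / M) ^ γ) atTop (𝓝 (w M)) := by
  have hM0 := hV M hM
  refine tendsto_sum_mul_rpow hM (div_self hM0.ne') fun v hv hne => ?_
  exact ⟨div_pos (hV v hv) hM0, (div_lt_one hM0).2 (lt_of_le_of_ne (hmax v hv) hne)⟩

theorem sum_mul_div_rpow_eq (hV : ∀ v ∈ V, 0 < v) {M : ℝ} (hM : 0 < M) {γ : ℝ} (hγ : 1 < γ) :
    ∑ v ∈ V, w v * (v / M) ^ γ = γ * (γ - 1) / M ^ γ * ∑ v ∈ V, w v * powKernel γ v := by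
  rw [mul_sum]
  refine sum_congr rfl fun v hv => ?_
  have h1 : γ - 1 ≠ 0 := by linarith
  have h0 : γ ≠ 0 := by linarith
  rw [Real.div_rpow (hV v hv).le hM.le, powKernel, if_neg hγ.ne', if_neg h0]
  field_simp

theorem weight_max_nonneg (hV : ∀ v ∈ V, 0 < v)
    (hK : ∀ α, 0 < ∑ v ∈ V, w v * powKernel α v) {M : ℝ} (hM : M ∈ V) (hmax : ∀ v ∈ V, v ≤ M) :
    0 ≤ w M := by
  refine ge_of_tendsto (tendsto_sum_mul_div_max_rpow hV hM hmax) ?_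
  filter_upwards [eventually_gt_atTop 1] with γ hγ
  have hM0 := hV M hM
  rw [sum_mul_div_rpow_eq hV hM0 hγ]
  have : 0 < γ - 1 := by linarith
  have := hK γ
  positivity

theorem weight_min_nonneg (hV : ∀ v ∈ V, 0 < v)
    (hK : ∀ α, 0 < ∑ v ∈ V, w v * powKernel α v) {m : ℝ} (hm : m ∈ V) (hmin : ∀ v ∈ V, m ≤ v) :
    0 ≤ w m := by
  have hm0 := hV m hm
  refine ge_of_tendsto (tendsto_sum_mul_rpow (r := fun v => m / v) hm (div_self hm0.ne')
    fun v hv hne => ⟨div_pos hm0 (hV v hv),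
      (div_lt_one (hV v hv)).2 (lt_of_le_of_ne (hmin v hv) hne.symm)⟩) ?_
  filter_upwards [eventually_gt_atTop 0] with γ hγ
  have : ∑ v ∈ V, w v * (m / v) ^ γ =
      γ * (γ + 1) * m ^ γ * ∑ v ∈ V, w v * powKernel (-γ) v := by
    rw [mul_sum]
    refine sum_congr rfl fun v hv => ?_
    rw [Real.div_rpow hm0.le (hV v hv).le, powKernel, if_neg (by linarith), if_neg (by linarith),
      Real.rpow_neg (hV v hv).le]
    have : (-γ * (-γ - 1)) = γ * (γ + 1) := by ring
    rw [this]
    have := Real.rpow_pos_of_pos (hV v hv) γ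
    field_simp
  rw [this]
  have := hK (-γ)
  positivity

theorem hingeSum_right_tail (hV : ∀ v ∈ V, 0 < v) (hne : V.Nonempty) (hw0 : ∀ v ∈ V, w v ≠ 0)
    (hK : ∀ α, 0 < ∑ v ∈ V, w v * powKernel α v) :
    ∃ b, (∀ u ≥ b, 0 ≤ hingeSum V w id (Real.exp u)) ∧
      ∃ u > b, 0 < hingeSum V w id (Real.exp u) := by
  obtain ⟨M, hM, hmax⟩ := exists_max_image V id hne
  have hM0 := hV M hM
  have hwM := lt_of_le_of_ne (weight_max_nonneg hV hK hM hmax) (hw0 M hM).symm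
  obtain ⟨b, hb, hbmax⟩ := exists_max_image (insert (M / 2) (V.erase M)) id (insert_nonempty _ _)
  simp only [id] at hmax hbmax
  have hbpos : 0 < b := (half_pos hM0).trans_le (hbmax _ (mem_insert_self _ _))
  have hbM : b < M := by
    rcases mem_insert.1 hb with h | h
    · linarith
    · exact lt_of_le_of_ne (hmax b (mem_of_mem_erase h)) (ne_of_mem_erase h)
  have heq : ∀ u ≥ Real.log b, hingeSum V w id (Real.exp u) = w M * max (M - Real.exp u) 0 := by
    intro u hu
    rw [hingeSum]
    refine sum_eq_single_of_mem M hM fun v hv hvM => ?_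
    have h1 : v ≤ b := hbmax v (mem_insert_of_mem (mem_erase.2 ⟨hvM, hv⟩))
    have h2 : b ≤ Real.exp u := (Real.log_le_iff_le_exp hbpos).1 hu
    rw [max_eq_right (by simp only [id]; linarith), mul_zero]
  refine ⟨Real.log b, fun u hu => ?_, Real.log ((b + M) / 2), ?_, ?_⟩
  · rw [heq u hu]; positivity
  · exact Real.log_lt_log hbpos (by linarith)
  · rw [heq _ (Real.log_le_log hbpos (by linarith)), Real.exp_log (by linarith)]
    exact mul_pos hwM (lt_max_of_lt_left (by linarith))

theorem hingeSum_left_tail (hV : ∀ v ∈ V, 0 < v) (hne : V.Nonempty) (hw0 : ∀ v ∈ V, w v ≠ 0)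
    (hw : ∑ v ∈ V, w v = 0) (hwv : ∑ v ∈ V, w v * v = 0)
    (hK : ∀ α, 0 < ∑ v ∈ V, w v * powKernel α v) :
    ∃ a, (∀ u ≤ a, 0 ≤ hingeSum V w id (Real.exp u)) ∧
      ∃ u < a, 0 < hingeSum V w id (Real.exp u) := by
  obtain ⟨m, hm, hmin⟩ := exists_min_image V id hne
  have hm0 := hV m hm
  have hwm := lt_of_le_of_ne (weight_min_nonneg hV hK hm hmin) (hw0 m hm).symm
  obtain ⟨a, ha, hamin⟩ := exists_min_image (insert (2 * m) (V.erase m)) id (insert_nonempty _ _)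
  simp only [id] at hmin hamin
  have ham : m < a := by
    rcases mem_insert.1 ha with h | h
    · linarith
    · exact lt_of_le_of_ne (hmin a (mem_of_mem_erase h)) (ne_of_mem_erase h).symm
  have hapos : 0 < a := hm0.trans ham
  have heq : ∀ u ≤ Real.log a, hingeSum V w id (Real.exp u) = w m * max (Real.exp u - m) 0 := by
    intro u hu
    rw [hingeSum_eq_sum_max_sub hw (by simpa using hwv)]
    refine sum_eq_single_of_mem m hm fun v hv hvm => ?_
    have h1 : a ≤ v := hamin v (mem_insert_of_mem (mem_erase.2 ⟨hvm, hv⟩))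
    have h2 : Real.exp u ≤ a := (Real.le_log_iff_exp_le hapos).1 hu
    rw [max_eq_right (by simp only [id]; linarith), mul_zero]
  refine ⟨Real.log a, fun u hu => ?_, Real.log ((m + a) / 2), ?_, ?_⟩
  · rw [heq u hu]; positivity
  · exact Real.log_lt_log (by linarith) (by linarith)
  · rw [heq _ (Real.log_le_log (by linarith) (by linarith)), Real.exp_log (by linarith)]
    exact mul_pos hwm (lt_max_of_lt_left (by linarith))

/-- Convolution of a hinge sum, sampled along a geometric progression, with binomial weights. -/
theorem sum_choose_mul_hingeSum_eq_coeff {h : ℝ → ℝ} {ε s : ℝ} {n N R : ℕ}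
    (hneg : ∀ u ≤ s, h u = 0) (hbig : ∀ i : ℕ, n ≤ i → h (s + i * ε) = 0) (hε : 0 < ε) :
    ∑ l ∈ range (N + 1), (N.choose l : ℝ) * (Real.exp (l * ε) * h (s + ((R : ℝ) - l) * ε)) =
      Real.exp (R * ε) * ((∑ i ∈ range n, Polynomial.C (h (s + i * ε) * Real.exp (-(i * ε))) *
        Polynomial.X ^ i) * (1 + Polynomial.X) ^ N).coeff R := by
  set P : Polynomial ℝ := ∑ i ∈ range n, Polynomial.C (h (s + i * ε) * Real.exp (-(i * ε))) *
        Polynomial.X ^ i with hP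
  have hcoeff : ∀ i, P.coeff i = h (s + i * ε) * Real.exp (-(i * ε)) := by
    intro i
    simp only [hP, Polynomial.finsetSum_coeff, Polynomial.coeff_C_mul, Polynomial.coeff_X_pow]
    simp only [mul_ite, mul_one, mul_zero, sum_ite_eq, mem_range]
    split_ifs with hi
    · rfl
    · rw [hbig i (by omega), zero_mul]
  rw [mul_comm P, Polynomial.coeff_mul, Nat.sum_antidiagonal_eq_sum_range_succ
      (fun i j => ((1 + Polynomial.X : Polynomial ℝ) ^ N).coeff i * P.coeff j), mul_sum,
    ← sum_filter_of_ne (s := range (N + 1)) (p := fun l => l ≤ R),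
    ← sum_filter_of_ne (s := range (R.succ)) (p := fun l => l ≤ N)]
  · have : (range (N + 1)).filter (fun l => l ≤ R) = (range R.succ).filter (fun l => l ≤ N) := by
      ext k; simp only [mem_filter, mem_range]; omega
    rw [this]
    refine sum_congr rfl fun l hl => ?_
    have hl : l ≤ R := by simp only [mem_filter, mem_range] at hl; omega
    rw [Polynomial.coeff_one_add_X_pow, hcoeff, Nat.cast_sub hl]
    have : Real.exp (l * ε) = Real.exp (R * ε) * Real.exp (-(((R : ℝ) - l) * ε)) := by
      rw [← Real.exp_add]; congr 1; ring
    rw [this]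
    ring
  · intro l _ hne
    by_contra hlt
    rw [Polynomial.coeff_one_add_X_pow, Nat.choose_eq_zero_of_lt (by omega)] at hne
    simp at hne
  · intro l _ hne
    by_contra hlt
    have : (R : ℝ) - l ≤ 0 := by
      have : (R : ℝ) ≤ l := by exact_mod_cast (not_le.1 hlt).le
      linarith
    rw [hneg _ (by nlinarith)] at hne
    simp at hne

/-- If all `powKernel` moments of a balanced weight are positive, its hinge sums become
nonnegative after smoothing by a suitable binomial distribution on a geometric progression. -/
theorem exists_binomial_smoothing (hV : ∀ v ∈ V, 0 < v) (hne : V.Nonempty)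
    (hw0 : ∀ v ∈ V, w v ≠ 0) (hw : ∑ v ∈ V, w v = 0) (hwv : ∑ v ∈ V, w v * v = 0)
    (hK : ∀ α, 0 < ∑ v ∈ V, w v * powKernel α v) (S : Finset ℝ) (hS : ∀ b ∈ S, 0 < b) :
    ∃ q : ℝ, 0 < q ∧ ∃ N : ℕ, ∀ b ∈ S, ∀ m : ℕ,
      0 ≤ ∑ l ∈ range (N + 1), (N.choose l : ℝ) * ∑ v ∈ V, w v * max (v * q ^ l - b * q ^ m) 0 := by
  obtain ⟨A, hA⟩ := ((V ∪ S).image Real.log).bddBelow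
  obtain ⟨B', hB'⟩ := (V.image Real.log).bddAbove
  obtain ⟨B, hAB, hBB'⟩ : ∃ B : ℝ, A < B ∧ B' ≤ B :=
    ⟨max (A + 1) B', lt_max_of_lt_left (by linarith), le_max_right _ _⟩
  have hAV : ∀ v ∈ V, A ≤ Real.log v := fun v hv =>
    hA (mem_coe.2 (mem_image_of_mem _ (mem_union_left _ hv)))
  have hAS : ∀ b ∈ S, A ≤ Real.log b := fun v hv =>
    hA (mem_coe.2 (mem_image_of_mem _ (mem_union_right _ hv)))
  have hBV : ∀ v ∈ V, Real.log v ≤ B := fun v hv =>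
    (hB' (mem_coe.2 (mem_image_of_mem _ hv))).trans hBB'
  have hwv' : ∑ v ∈ V, w v * id v = 0 := hwv
  set h : ℝ → ℝ := fun u => hingeSum V w id (Real.exp u) with hh
  have hhc : Continuous h := (continuous_hingeSum V w id).comp Real.continuous_exp
  have hhA : ∀ u ≤ A, h u = 0 := fun u hu => hingeSum_eq_zero_of_le hw hwv' fun v hv =>
    (Real.le_log_iff_exp_le (hV v hv)).1 (hu.trans (hAV v hv))
  have hhB : ∀ u ≥ B, h u = 0 := fun u hu => hingeSum_eq_zero_of_ge fun v hv =>
    (Real.log_le_iff_le_exp (hV v hv)).1 ((hBV v hv).trans hu)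
  obtain ⟨b, hb, hb'⟩ := hingeSum_right_tail hV hne hw0 hK
  obtain ⟨a, ha, ha'⟩ := hingeSum_left_tail hV hne hw0 hw hwv hK
  obtain ⟨ε₀, hε₀, H⟩ := exists_riemannSum_exp_pos hhc hAB hhA hhB ha ha' hb hb' fun β => by
    have := integral_hingeSum_exp (p := id) hV hw hwv' hAV hBV (β + 1)
    simp only [add_sub_cancel_right] at this
    exact this ▸ hK (β + 1)
  obtain ⟨ε, hε, hεlt⟩ := exists_between (lt_min hε₀ one_pos)
  rw [lt_min_iff] at hεlt
  have hgrid : ∀ b : ℝ, ∃ r n : ℕ, A ≤ Real.log b → ∃ s : ℝ, s = Real.log b - r * ε ∧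
      A - 1 ≤ s ∧ s ≤ A ∧ B ≤ s + n * ε ∧ s + n * ε ≤ B + 1 := by
    intro b
    by_cases hb : A ≤ Real.log b
    · have h1 := Nat.le_ceil ((Real.log b - A) / ε)
      have h2 := Nat.ceil_lt_add_one (a := (Real.log b - A) / ε) (div_nonneg (by linarith) hε.le)
      set r := ⌈(Real.log b - A) / ε⌉₊
      rw [div_le_iff₀ hε] at h1
      rw [← sub_lt_iff_lt_add, lt_div_iff₀ hε] at h2
      have hsB : Real.log b - r * ε ≤ B := by linarith
      have h3 := Nat.le_ceil ((B - (Real.log b - r * ε)) / ε)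
      have h4 := Nat.ceil_lt_add_one (a := (B - (Real.log b - r * ε)) / ε)
        (div_nonneg (by linarith) hε.le)
      set n := ⌈(B - (Real.log b - r * ε)) / ε⌉₊
      rw [div_le_iff₀ hε] at h3
      rw [← sub_lt_iff_lt_add, lt_div_iff₀ hε] at h4
      exact ⟨r, n, fun _ => ⟨_, rfl, by linarith, by linarith, by linarith, by linarith⟩⟩
    · exact ⟨0, 0, fun h => absurd h hb⟩
  choose r n hrn using hgrid
  set P : ℝ → Polynomial ℝ := fun b => ∑ i ∈ range (n b),
    Polynomial.C (h (Real.log b - r b * ε + i * ε) * Real.exp (-(i * ε))) * Polynomial.X ^ i with hP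
  have hPpos : ∀ b ∈ S, ∀ z : ℝ, 0 < z → 0 < (P b).eval z := by
    intro b hb z hz
    obtain ⟨s, hs, h1, h2, h3, h4⟩ := hrn b (hAS b hb)
    set β := Real.log z / ε - 1 with hβ
    have := H ε hε hεlt.1 s (n b) h1 h2 h3 h4 β
    have heq : (P b).eval z = Real.exp (-(β * s)) *
        ∑ i ∈ range (n b), h (s + i * ε) * Real.exp (β * (s + i * ε)) := by
      simp only [hP, Polynomial.eval_finsetSum, Polynomial.eval_mul, Polynomial.eval_C,
        Polynomial.eval_pow, Polynomial.eval_X, ← hs]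
      rw [mul_sum]
      refine sum_congr rfl fun i _ => ?_
      rw [mul_left_comm, ← Real.exp_add, mul_assoc]
      congr 1
      have hzi : z ^ i = Real.exp (i * Real.log z) := by
        rw [Real.exp_nat_mul, Real.exp_log hz]
      rw [hzi, ← Real.exp_add]
      congr 1
      rw [hβ]
      field_simp
      ring
    rw [heq]
    positivity
  obtain ⟨N, hN⟩ := ((Finset.eventually_all S).2 fun b hb =>
    eventually_coeff_mul_one_add_X_pow_nonneg (hPpos b hb)).exists
  refine ⟨Real.exp ε, Real.exp_pos ε, N, fun b hb m => ?_⟩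
  obtain ⟨s, hs, h1, h2, h3, h4⟩ := hrn b (hAS b hb)
  have hsum := sum_choose_mul_hingeSum_eq_coeff (h := h) (ε := ε) (s := s) (n := n b) (N := N)
    (R := r b + m) (fun u hu => hhA u (hu.trans h2)) (fun i hi => hhB _ (by
      have : (n b : ℝ) * ε ≤ i * ε := by gcongr
      linarith)) hε
  rw [hs] at hsum
  have hterm : ∀ l : ℕ, ∑ v ∈ V, w v * max (v * Real.exp ε ^ l - b * Real.exp ε ^ m) 0 =
      Real.exp (l * ε) * h (Real.log b - r b * ε + (((r b + m : ℕ) : ℝ) - l) * ε) := by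
    intro l
    simp only [hh, hingeSum, id]
    rw [mul_sum]
    refine sum_congr rfl fun v _ => ?_
    rw [mul_left_comm]
    congr 1
    rw [mul_max_of_nonneg _ _ (Real.exp_pos _).le, mul_zero, mul_sub, ← Real.exp_add]
    have : (l : ℝ) * ε + (Real.log b - r b * ε + (((r b + m : ℕ) : ℝ) - l) * ε) =
        Real.log b + m * ε := by push_cast; ring
    rw [this, Real.exp_add, Real.exp_log (hS b hb), Real.exp_nat_mul, Real.exp_nat_mul]
    ring_nf
  simp only [hterm]
  rw [hsum]
  exact mul_nonneg (Real.exp_pos _).le (hN b hb _)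

end ValueWeights

section Trumping

theorem fAlpha_lt_iff {d : ℕ} (hd : 0 < d) {x y : Fin d → ℝ} (hx : ∀ i, 0 < x i)
    (hy : ∀ i, 0 < y i) (α : ℝ) :
    fAlpha α x < fAlpha α y ↔ ∑ i, powKernel α (x i) < ∑ i, powKernel α (y i) := by
  have : Nonempty (Fin d) := ⟨⟨0, hd⟩⟩
  have hsx : 0 < ∑ i, x i ^ α := sum_pos (fun i _ => Real.rpow_pos_of_pos (hx i) α) univ_nonempty
  have hsy : 0 < ∑ i, y i ^ α := sum_pos (fun i _ => Real.rpow_pos_of_pos (hy i) α) univ_nonempty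
  unfold fAlpha powKernel
  rcases lt_trichotomy α 1 with h1 | rfl | h1
  · rw [if_neg h1.not_gt, if_neg h1.not_gt, if_neg h1.ne, if_neg h1.ne]
    simp only [if_neg h1.ne]
    rcases lt_trichotomy α 0 with h0 | rfl | h0
    · simp only [if_neg h0.not_gt, if_neg h0.ne, ← sum_div]
      rw [Real.log_lt_log_iff hsx hsy, div_lt_div_iff_of_pos_right (by nlinarith)]
    · simp
    · simp only [if_pos h0, if_neg h0.ne', ← sum_div]
      rw [neg_lt_neg_iff, Real.log_lt_log_iff hsy hsx, div_lt_div_right_of_neg (by nlinarith)]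
  · simp
  · have h0 : 0 < α := by linarith
    simp only [if_pos h1, if_neg h1.ne', if_neg h0.ne', ← sum_div]
    rw [Real.log_lt_log_iff hsx hsy, div_lt_div_iff_of_pos_right (by nlinarith)]

/-- The difference of the multiplicities of `v` as an entry of `y` and of `x`. -/
noncomputable def multDiff {d : ℕ} (x y : Fin d → ℝ) (v : ℝ) : ℝ :=
  (#{i | y i = v} : ℝ) - #{i | x i = v}

/-- The values whose multiplicities as entries of `x` and `y` differ. -/
noncomputable def diffValues {d : ℕ} (x y : Fin d → ℝ) : Finset ℝ :=
  (univ.image x ∪ univ.image y).filter fun v => multDiff x y v ≠ 0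

variable {d : ℕ} {x y : Fin d → ℝ}

theorem sum_multDiff_mul (x y : Fin d → ℝ) (f : ℝ → ℝ) :
    ∑ v ∈ diffValues x y, multDiff x y v * f v = ∑ i, f (y i) - ∑ i, f (x i) := by
  have hcount : ∀ z : Fin d → ℝ, univ.image z ⊆ univ.image x ∪ univ.image y →
      ∑ i, f (z i) = ∑ v ∈ univ.image x ∪ univ.image y, (#{i | z i = v} : ℝ) * f v := by
    intro z hz
    rw [← sum_fiberwise_of_maps_to (s := univ) (g := z)
      fun i _ => hz (mem_image_of_mem z (mem_univ i))]
    refine sum_congr rfl fun v _ => ?_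
    rw [sum_congr rfl fun i hi => congrArg f (mem_filter.1 hi).2, sum_const, nsmul_eq_mul]
  rw [hcount y subset_union_right, hcount x subset_union_left, ← sum_sub_distrib, diffValues,
    sum_filter_of_ne]
  · exact sum_congr rfl fun v _ => by rw [multDiff]; ring
  · intro v _ h
    exact left_ne_zero_of_mul h

theorem diffValues_nonempty (hne : ¬ ∃ σ : Equiv.Perm (Fin d), x = y ∘ σ) :
    (diffValues x y).Nonempty := by
  contrapose! hne
  have hcard : ∀ v, #{i | y i = v} = #{i | x i = v} := by
    intro v
    by_cases hv : v ∈ univ.image x ∪ univ.image y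
    · have : v ∉ diffValues x y := by simp [hne]
      rw [diffValues, mem_filter, not_and, not_not, multDiff, sub_eq_zero] at this
      exact_mod_cast this hv
    · simp only [mem_union, mem_image, mem_univ, true_and, not_or, not_exists] at hv
      rw [filter_false_of_mem fun i _ => hv.2 i, filter_false_of_mem fun i _ => hv.1 i]
  have e : ∀ v, {i // x i = v} ≃ {i // y i = v} := fun v =>
    Fintype.equivOfCardEq (by rw [Fintype.card_subtype, Fintype.card_subtype, hcard])
  exact ⟨Equiv.ofFiberEquiv e, funext fun i => (Equiv.ofFiberEquiv_map e i).symm⟩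

theorem pos_of_mem_diffValues (hx : ∀ i, 0 < x i) (hy : ∀ i, 0 < y i) {v : ℝ}
    (hv : v ∈ diffValues x y) : 0 < v := by
  simp only [diffValues, mem_filter, mem_union, mem_image, mem_univ, true_and] at hv
  rcases hv.1 with ⟨i, rfl⟩ | ⟨i, rfl⟩
  exacts [hx i, hy i]

theorem multDiff_ne_zero {v : ℝ} (hv : v ∈ diffValues x y) : multDiff x y v ≠ 0 :=
  (mem_filter.1 hv).2

theorem sum_multDiff (x y : Fin d → ℝ) : ∑ v ∈ diffValues x y, multDiff x y v = 0 := by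
  simpa using sum_multDiff_mul x y fun _ => 1

theorem sum_multDiff_mul_self (hsum : ∑ i, x i = ∑ i, y i) :
    ∑ v ∈ diffValues x y, multDiff x y v * v = 0 := by
  rw [sum_multDiff_mul x y fun v => v, hsum, sub_self]

theorem sum_powKernel_lt_of_pMaj {k : ℕ} {c : Fin k → ℝ} (hc : IsProbVec c)
    (hx : ∀ i, 0 < x i) (hy : ∀ i, 0 < y i) (hsum : ∑ i, x i = ∑ i, y i)
    (hne : ¬ ∃ σ : Equiv.Perm (Fin d), x = y ∘ σ)
    (h : PMaj (pvTensor x c) (pvTensor y c)) (α : ℝ) :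
    ∑ i, powKernel α (x i) < ∑ i, powKernel α (y i) := by
  set V := diffValues x y
  set w := multDiff x y
  have hV : ∀ v ∈ V, 0 < v := fun v hv => pos_of_mem_diffValues hx hy hv
  have hVne : V.Nonempty := diffValues_nonempty hne
  have hw : ∑ v ∈ V, w v = 0 := sum_multDiff x y
  have hwv : ∑ v ∈ V, w v * v = 0 := sum_multDiff_mul_self hsum
  set J : Finset (Fin k) := univ.filter fun j => 0 < c j with hJ
  have hJpos : ∀ j ∈ J, 0 < c j := fun j hj => (mem_filter.1 hj).2
  have hJne : J.Nonempty := by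
    by_contra hempty
    rw [not_nonempty_iff_eq_empty, hJ, filter_eq_empty_iff] at hempty
    have : ∑ j, c j ≤ 0 := sum_nonpos fun j hj => not_lt.1 (hempty hj)
    linarith [hc.2]
  set W : Fin k × ℝ → ℝ := fun z => w z.2 with hW
  set p : Fin k × ℝ → ℝ := fun z => z.2 * c z.1 with hp
  have hWsum : ∑ z ∈ J ×ˢ V, W z = 0 := by
    rw [sum_product]
    exact sum_eq_zero fun j _ => hw
  have hWp : ∑ z ∈ J ×ˢ V, W z * p z = 0 := by
    rw [sum_product]
    refine sum_eq_zero fun j _ => ?_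
    simp only [hW, hp, ← mul_assoc]
    rw [← sum_mul, hwv, zero_mul]
  have hppos : ∀ z ∈ J ×ˢ V, 0 < p z := fun z hz =>
    mul_pos (hV _ (mem_product.1 hz).2) (hJpos _ (mem_product.1 hz).1)
  have hnonneg : ∀ t, 0 ≤ t → 0 ≤ hingeSum (J ×ˢ V) W p t := by
    intro t ht
    have hmaj := h.sum_max_le ht
    have hprod : ∀ z : Fin d → ℝ, ∑ q, max (pvTensor z c q - t) 0 =
        ∑ j ∈ J, ∑ i, max (z i * c j - t) 0 := by
      intro z
      rw [Fintype.sum_prod_type_right]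
      symm
      refine sum_subset (subset_univ J) fun j _ hj => sum_eq_zero fun i _ => ?_
      have hcj : c j = 0 := le_antisymm (by simpa [hJ] using hj) (hc.1 j)
      rw [hcj, mul_zero, zero_sub, max_eq_right (by linarith)]
    rw [hprod, hprod] at hmaj
    rw [hingeSum, sum_product]
    simp only [hW, hp]
    rw [sum_congr rfl fun j _ => sum_multDiff_mul x y fun v => max (v * c j - t) 0,
      sum_sub_distrib]
    linarith
  obtain ⟨A, hA⟩ := ((J ×ˢ V).image fun z => Real.log (p z)).bddBelow
  obtain ⟨B', hB'⟩ := ((J ×ˢ V).image fun z => Real.log (p z)).bddAbove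
  obtain ⟨B, hAB, hBB'⟩ : ∃ B : ℝ, A < B ∧ B' ≤ B :=
    ⟨max (A + 1) B', lt_max_of_lt_left (by linarith), le_max_right _ _⟩
  have hint := integral_hingeSum_exp hppos hWsum hWp (A := A) (B := B)
    (fun z hz => hA (mem_coe.2 (mem_image_of_mem _ hz)))
    (fun z hz => (hB' (mem_coe.2 (mem_image_of_mem _ hz))).trans hBB')
  have hK : ∀ α, ∑ z ∈ J ×ˢ V, W z * powKernel α (p z) =
      (∑ j ∈ J, c j ^ α) * ∑ v ∈ V, w v * powKernel α v := by
    intro α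
    rw [sum_product, sum_mul]
    exact sum_congr rfl fun j hj =>
      sum_mul_powKernel_mul (p := fun v => v) hV hw hwv (hJpos j hj) α
  have hC : ∀ α : ℝ, 0 < ∑ j ∈ J, c j ^ α := fun α =>
    sum_pos (fun j hj => Real.rpow_pos_of_pos (hJpos j hj) α) hJne
  have hex : ∃ u ∈ Set.Icc A B, 0 < hingeSum (J ×ˢ V) W p (Real.exp u) := by
    by_contra! hall
    have hzero : ∀ α, ∑ v ∈ V, w v * powKernel α v = 0 := by
      intro α
      have h0 : ∫ u in A..B, hingeSum (J ×ˢ V) W p (Real.exp u) * Real.exp ((α - 1) * u) = 0 := by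
        refine (intervalIntegral.integral_congr (g := fun _ => (0 : ℝ)) fun u hu => ?_).trans
          (by simp)
        rw [Set.uIcc_of_le hAB.le] at hu
        simp only [le_antisymm (hall u hu) (hnonneg _ (Real.exp_pos u).le), zero_mul]
      rw [hint, hK] at h0
      exact (mul_eq_zero.1 h0).resolve_left (hC α).ne'
    obtain ⟨M, hM, hmax⟩ := exists_max_image V id hVne
    have hM0 := hV M hM
    have hlim : Tendsto (fun γ : ℝ => ∑ v ∈ V, w v * (v / M) ^ γ) atTop (𝓝 0) := by
      refine tendsto_const_nhds.congr' ?_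
      filter_upwards [eventually_gt_atTop 1] with γ hγ
      rw [sum_mul_div_rpow_eq hV hM0 hγ, hzero, mul_zero]
    exact multDiff_ne_zero hM
      (tendsto_nhds_unique (tendsto_sum_mul_div_max_rpow hV hM hmax) hlim)
  have hpos : 0 < ∫ u in A..B, hingeSum (J ×ˢ V) W p (Real.exp u) * Real.exp ((α - 1) * u) := by
    refine intervalIntegral.integral_pos hAB ?_ (fun u _ => ?_) ?_
    · have := continuous_hingeSum (J ×ˢ V) W p
      exact Continuous.continuousOn (by fun_prop)
    · exact mul_nonneg (hnonneg _ (Real.exp_pos u).le) (Real.exp_pos _).le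
    · obtain ⟨u, hu, hu'⟩ := hex
      exact ⟨u, hu, mul_pos hu' (Real.exp_pos _)⟩
  rw [hint, hK] at hpos
  have := pos_of_mul_pos_right hpos (hC α).le
  rw [sum_multDiff_mul x y (powKernel α)] at this
  linarith

theorem exists_pMaj_of_sum_powKernel_lt (hx : ∀ i, 0 < x i) (hy : ∀ i, 0 < y i)
    (hsum : ∑ i, x i = ∑ i, y i) (hne : ¬ ∃ σ : Equiv.Perm (Fin d), x = y ∘ σ)
    (h : ∀ α, ∑ i, powKernel α (x i) < ∑ i, powKernel α (y i)) :
    ∃ (k : ℕ) (c : Fin k → ℝ), IsProbVec c ∧ PMaj (pvTensor x c) (pvTensor y c) := by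
  obtain ⟨q, hq, N, hN⟩ := exists_binomial_smoothing (V := diffValues x y) (w := multDiff x y)
    (fun v hv => pos_of_mem_diffValues hx hy hv) (diffValues_nonempty hne)
    (fun v hv => multDiff_ne_zero hv) (sum_multDiff x y) (sum_multDiff_mul_self hsum)
    (fun α => by rw [sum_multDiff_mul x y (powKernel α)]; linarith [h α])
    (univ.image y) (by simpa using hy)
  set e := (Fintype.equivFin (Finset (Fin N))).symm
  set Z : ℝ := ∑ T : Finset (Fin N), q ^ #T with hZ
  have hZpos : 0 < Z := sum_pos (fun T _ => pow_pos hq _) univ_nonempty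
  set c : Fin (Fintype.card (Finset (Fin N))) → ℝ := fun j => q ^ #(e j) / Z with hc
  have hcsum : ∑ j, c j = 1 := by
    rw [hc, ← sum_div, e.sum_comp fun T : Finset (Fin N) => q ^ #T, ← hZ, div_self hZpos.ne']
  have hc0 : ∀ j, 0 ≤ c j := fun j => by positivity
  refine ⟨_, c, ⟨hc0, hcsum⟩, pMaj_of_sum_max_le
    (fun z => mul_nonneg (hx _).le (hc0 _)) (fun z => mul_nonneg (hy _).le (hc0 _)) ?_ ?_⟩
  · simp only [pvTensor, Fintype.sum_prod_type, ← mul_sum, ← sum_mul, hsum]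
  · rintro ⟨i₀, j₀⟩
    rw [← sub_nonneg, Fintype.sum_prod_type_right, Fintype.sum_prod_type_right,
      ← sum_sub_distrib]
    have hinner : ∀ j, ∑ i, max (pvTensor y c (i, j) - pvTensor y c (i₀, j₀)) 0 -
        ∑ i, max (pvTensor x c (i, j) - pvTensor y c (i₀, j₀)) 0 =
        Z⁻¹ * ∑ v ∈ diffValues x y, multDiff x y v *
          max (v * q ^ #(e j) - y i₀ * q ^ #(e j₀)) 0 := by
      intro j
      rw [sum_multDiff_mul x y fun v => max (v * q ^ #(e j) - y i₀ * q ^ #(e j₀)) 0, mul_sub,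
        mul_sum, mul_sum]
      have hscale : ∀ v, max (v * c j - y i₀ * c j₀) 0 =
          Z⁻¹ * max (v * q ^ #(e j) - y i₀ * q ^ #(e j₀)) 0 := by
        intro v
        rw [mul_max_of_nonneg _ _ (by positivity), mul_zero]
        congr 1
        simp only [hc]
        ring
      simp only [pvTensor, hscale]
    rw [sum_congr rfl fun j _ => hinner j, ← mul_sum,
      e.sum_comp fun T : Finset (Fin N) => ∑ v ∈ diffValues x y, multDiff x y v *
          max (v * q ^ #T - y i₀ * q ^ #(e j₀)) 0, ← powerset_univ,
      sum_powerset_apply_card fun l => ∑ v ∈ diffValues x y, multDiff x y v *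
          max (v * q ^ l - y i₀ * q ^ #(e j₀)) 0, card_univ, Fintype.card_fin]
    simp only [nsmul_eq_mul]
    exact mul_nonneg (by positivity) (hN _ (mem_image_of_mem y (mem_univ i₀)) _)

end Trumping

end Proofs

/-- Turgut–Klimesh characterization of the trumping relation: for probability vectors
`x, y` of dimension `d ≥ 2` with strictly positive entries whose nonincreasing
rearrangements differ, there is a catalyst `c` with `x ⊗ c ≺ y ⊗ c` iff
`f_α(y) > f_α(x)` for all real `α`. -/
theorem trumping_iff_fAlpha {d : ℕ} (hd : 2 ≤ d) (x y : Fin d → ℝ)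
    (hx : IsProbVec x) (hy : IsProbVec y)
    (hxpos : ∀ i, 0 < x i) (hypos : ∀ i, 0 < y i)
    (hne : ¬ ∃ σ : Equiv.Perm (Fin d), x = y ∘ σ) :
    (∃ (k : ℕ) (c : Fin k → ℝ), IsProbVec c ∧ PMaj (pvTensor x c) (pvTensor y c)) ↔
      (∀ α : ℝ, fAlpha α x < fAlpha α y) := by
  have hsum : ∑ i, x i = ∑ i, y i := hx.2.trans hy.2.symm
  simp only [fAlpha_lt_iff (by omega : 0 < d) hxpos hypos]
  constructor
  · rintro ⟨k, c, hc, h⟩ α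
    exact sum_powKernel_lt_of_pMaj hc hxpos hypos hsum hne h α
  · exact exists_pMaj_of_sum_powKernel_lt hxpos hypos hsum hne
end

section
/- Let x, y be probability vectors of dimension d. If there exist probability vectors c and c′ (of some finite dimensions) such that x⊗c ≺ y⊗c and y⊗c′ ≺ x⊗c′, then the nonincreasing rearrangements of x and y are equal, i.e., x is a permutation of y. Consequently, two bipartite pure states that are interconvertible under catalytic LOCC are related by local unitaries. -/
open Finset

/-- Majorization tested against the functions `a ↦ (a - t)⁺`. -/
lemma PMaj.sum_posPart_sub_le {ι κ : Type*} [Fintype ι] [DecidableEq ι] [Fintype κ]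
    [DecidableEq κ] {x : ι → ℝ} {y : κ → ℝ} (h : PMaj x y) {t : ℝ} (ht : 0 ≤ t) :
    ∑ i, max (x i - t) 0 ≤ ∑ j, max (y j - t) 0 := by
  set s : Finset ι := univ.filter (fun i => t < x i) with hs
  obtain ⟨u, hu, hyu⟩ := exists_mem_eq_sup' (s := (univ : Finset κ).powerset.filter
    (fun u => u.card ≤ s.card)) ⟨∅, by simp⟩ (fun u => ∑ j ∈ u, y j)
  have hu_card : (u.card : ℝ) ≤ s.card := by exact_mod_cast (mem_filter.mp hu).2
  have hx_le : ∑ i ∈ s, x i ≤ topSum x s.card :=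
    le_sup' (fun s => ∑ i ∈ s, x i) (by simp)
  calc ∑ i, max (x i - t) 0 = ∑ i ∈ s, (x i - t) := by
        rw [hs, sum_filter]
        refine sum_congr rfl fun i _ => ?_
        split_ifs with hi
        · exact max_eq_left (by linarith)
        · exact max_eq_right (by linarith)
    _ = ∑ i ∈ s, x i - s.card * t := by simp
    _ ≤ ∑ j ∈ u, y j - s.card * t := by
        gcongr
        exact hx_le.trans ((h.1 _).trans hyu.le)
    _ ≤ ∑ j ∈ u, y j - u.card * t := by gcongr
    _ = ∑ j ∈ u, (y j - t) := by simp
    _ ≤ ∑ j ∈ u, max (y j - t) 0 := sum_le_sum fun j _ => le_max_left _ _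
    _ ≤ ∑ j, max (y j - t) 0 :=
        sum_le_sum_of_subset_of_nonneg (subset_univ u) fun j _ _ => le_max_right _ _

/-- A power with exponent at least two as a mixture of the functions `a ↦ (a - t)⁺`. -/
lemma integral_pow_mul_posPart_sub (n : ℕ) {a : ℝ} (ha0 : 0 ≤ a) (ha1 : a ≤ 1) :
    ∫ t in (0 : ℝ)..1, t ^ n * max (a - t) 0 = a ^ (n + 2) / ((n + 1) * (n + 2)) := by
  have hint : ∀ b c : ℝ, IntervalIntegrable (fun t : ℝ => t ^ n * max (a - t) 0)
      MeasureTheory.volume b c := fun b c =>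
    Continuous.intervalIntegrable (by fun_prop) b c
  have hleft : ∫ t in (0 : ℝ)..a, t ^ n * max (a - t) 0
      = ∫ t in (0 : ℝ)..a, (a * t ^ n - t ^ (n + 1)) := by
    refine intervalIntegral.integral_congr fun t ht => ?_
    rw [Set.uIcc_of_le ha0] at ht
    simp only [max_eq_left (sub_nonneg.mpr ht.2)]
    ring
  have hright : ∫ t in a..1, t ^ n * max (a - t) 0 = ∫ t in a..1, (0 : ℝ) := by
    refine intervalIntegral.integral_congr fun t ht => ?_
    rw [Set.uIcc_of_le ha1] at ht
    simp only [max_eq_right (sub_nonpos.mpr ht.1), mul_zero]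
  rw [← intervalIntegral.integral_add_adjacent_intervals (hint 0 a) (hint a 1), hleft, hright,
    intervalIntegral.integral_sub (Continuous.intervalIntegrable (by fun_prop) _ _)
      (Continuous.intervalIntegrable (by fun_prop) _ _),
    intervalIntegral.integral_const_mul, integral_pow, integral_pow,
    intervalIntegral.integral_zero]
  have h1 : (n : ℝ) + 1 ≠ 0 := by positivity
  have h2 : (n : ℝ) + 2 ≠ 0 := by positivity
  have h3 : (n : ℝ) + 1 + 1 ≠ 0 := by positivity
  push_cast
  simp only [ne_eq, Nat.succ_ne_zero, not_false_eq_true, zero_pow]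
  field_simp
  ring

lemma IsProbVec.le_one {ι : Type*} [Fintype ι] {x : ι → ℝ} (hx : IsProbVec x) (i : ι) :
    x i ≤ 1 :=
  hx.2 ▸ single_le_sum (fun j _ => hx.1 j) (mem_univ i)

lemma IsProbVec.pvTensor {ι κ : Type*} [Fintype ι] [Fintype κ] {x : ι → ℝ} {c : κ → ℝ}
    (hx : IsProbVec x) (hc : IsProbVec c) : IsProbVec (pvTensor x c) := by
  refine ⟨fun p => mul_nonneg (hx.1 _) (hc.1 _), ?_⟩
  simp only [_root_.pvTensor, Fintype.sum_prod_type, ← mul_sum, hc.2, mul_one, hx.2]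

lemma sum_pvTensor_pow {ι κ : Type*} [Fintype ι] [Fintype κ] (x : ι → ℝ) (c : κ → ℝ) (n : ℕ) :
    ∑ p, pvTensor x c p ^ n = (∑ i, x i ^ n) * ∑ j, c j ^ n := by
  simp only [pvTensor, Fintype.sum_prod_type, mul_pow, ← mul_sum, ← sum_mul]

lemma IsProbVec.sum_pow_pos {ι : Type*} [Fintype ι] {c : ι → ℝ} (hc : IsProbVec c) (n : ℕ) :
    0 < ∑ i, c i ^ n := by
  obtain ⟨i, -, hi⟩ : ∃ i ∈ univ, c i ≠ 0 :=
    exists_ne_zero_of_sum_ne_zero (by rw [hc.2]; exact one_ne_zero)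
  exact sum_pos' (fun j _ => pow_nonneg (hc.1 j) n)
    ⟨i, mem_univ i, pow_pos ((hc.1 i).lt_of_ne' hi) n⟩

/-- Power sums of exponent at least two are Schur convex on probability vectors. -/
lemma PMaj.sum_pow_add_two_le {ι κ : Type*} [Fintype ι] [DecidableEq ι] [Fintype κ]
    [DecidableEq κ] {x : ι → ℝ} {y : κ → ℝ} (hx : IsProbVec x) (hy : IsProbVec y)
    (h : PMaj x y) (n : ℕ) : ∑ i, x i ^ (n + 2) ≤ ∑ j, y j ^ (n + 2) := by
  have hint : ∀ a : ℝ, IntervalIntegrable (fun t : ℝ => t ^ n * max (a - t) 0)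
      MeasureTheory.volume 0 1 := fun a =>
    Continuous.intervalIntegrable (by fun_prop) 0 1
  have hle : ∫ t in (0 : ℝ)..1, ∑ i, t ^ n * max (x i - t) 0
      ≤ ∫ t in (0 : ℝ)..1, ∑ j, t ^ n * max (y j - t) 0 := by
    refine intervalIntegral.integral_mono_on zero_le_one
      (Continuous.intervalIntegrable (by fun_prop) _ _)
      (Continuous.intervalIntegrable (by fun_prop) _ _) fun t ht => ?_
    rw [← mul_sum, ← mul_sum]
    exact mul_le_mul_of_nonneg_left (h.sum_posPart_sub_le ht.1) (pow_nonneg ht.1 n)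
  rw [intervalIntegral.integral_finsetSum fun i _ => hint (x i),
    intervalIntegral.integral_finsetSum fun j _ => hint (y j),
    sum_congr rfl fun i _ => integral_pow_mul_posPart_sub n (hx.1 i) (hx.le_one i),
    sum_congr rfl fun j _ => integral_pow_mul_posPart_sub n (hy.1 j) (hy.le_one j),
    ← sum_div, ← sum_div] at hle
  exact (div_le_div_iff_of_pos_right (by positivity)).mp hle

/-- Catalytic majorization is monotone for power sums of exponent at least two. -/
lemma sum_pow_add_two_le_of_catalytic {ι ι' κ : Type*} [Fintype ι] [DecidableEq ι] [Fintype ι']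
    [DecidableEq ι'] [Fintype κ] [DecidableEq κ] {x : ι → ℝ} {y : ι' → ℝ} {c : κ → ℝ}
    (hx : IsProbVec x) (hy : IsProbVec y) (hc : IsProbVec c)
    (h : PMaj (pvTensor x c) (pvTensor y c)) (n : ℕ) :
    ∑ i, x i ^ (n + 2) ≤ ∑ i, y i ^ (n + 2) := by
  have hle := h.sum_pow_add_two_le (hx.pvTensor hc) (hy.pvTensor hc) n
  rw [sum_pvTensor_pow, sum_pvTensor_pow] at hle
  exact le_of_mul_le_mul_right hle (hc.sum_pow_pos _)

/-- Vectors with the same power sums agree up to a permutation. -/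
lemma exists_perm_of_sum_pow_eq {ι K : Type*} [Fintype ι] [Field K] [CharZero K]
    {x y : ι → K} (h : ∀ n : ℕ, ∑ i, x i ^ n = ∑ i, y i ^ n) :
    ∃ σ : Equiv.Perm ι, x = y ∘ σ := by
  classical
  have heval : ∀ p : Polynomial K, ∑ i, p.eval (x i) = ∑ i, p.eval (y i) := fun p => by
    simp only [Polynomial.eval_eq_sum_range]
    rw [sum_comm, sum_comm (s := univ)]
    simp only [← mul_sum, h]
  suffices hfib : ∀ v, Nonempty ({i // x i = v} ≃ {i // y i = v}) from
    ⟨Equiv.ofFiberEquiv fun v => (hfib v).some,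
      funext fun i => (Equiv.ofFiberEquiv_map (fun v => (hfib v).some) i).symm⟩
  intro v
  let S : Finset K := insert v (univ.image x ∪ univ.image y)
  have hind : ∀ w ∈ S, (Lagrange.basis S id v).eval w = if w = v then 1 else 0 := by
    intro w hw
    split_ifs with hvw
    · subst hvw
      exact Lagrange.eval_basis_self (v := id) Function.injective_id.injOn hw
    · exact Lagrange.eval_basis_of_ne (v := id) (Ne.symm hvw) hw
  have hcount := heval (Lagrange.basis S id v)
  rw [sum_congr rfl fun i _ => hind (x i) (by simp [S]),
    sum_congr rfl fun i _ => hind (y i) (by simp [S]), sum_boole, sum_boole] at hcount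
  rw [← Fintype.card_eq, Fintype.card_subtype, Fintype.card_subtype]
  exact_mod_cast hcount

/-- If `x` can be catalytically transformed into `y` and vice versa, then `x` is a
permutation of `y` (interconvertible states are related by local unitaries). -/
theorem catalytic_interconvertible_perm {d : ℕ} (x y : Fin d → ℝ)
    (hx : IsProbVec x) (hy : IsProbVec y)
    (h1 : ∃ (k : ℕ) (c : Fin k → ℝ), IsProbVec c ∧ PMaj (pvTensor x c) (pvTensor y c))
    (h2 : ∃ (k : ℕ) (c : Fin k → ℝ), IsProbVec c ∧ PMaj (pvTensor y c) (pvTensor x c)) :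
    ∃ σ : Equiv.Perm (Fin d), x = y ∘ σ := by
  obtain ⟨_, c, hc, hxy⟩ := h1
  obtain ⟨_, c', hc', hyx⟩ := h2
  refine exists_perm_of_sum_pow_eq fun n => ?_
  match n with
  | 0 => simp
  | 1 => simp only [pow_one, hx.2, hy.2]
  | n + 2 =>
    exact (sum_pow_add_two_le_of_catalytic hx hy hc hxy n).antisymm
      (sum_pow_add_two_le_of_catalytic hy hx hc' hyx n)
end
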